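/- Let ℓ be a classical solution of the continuous swimmer problem with initial data ℓ₀ ∈ H²(0,Λ), and for each N let ℓ_h be the piecewise affine function built from a solution of the N-spring ODE system with initial values ℓ_j(0) = ℓ_{0,h}(y_j), ℓ_{0,h} ∈ V_h. Then there exists a constant C > 0, independent of h, such that for all t ≥ 0: ‖∂_y(ℓ_h − ℓ)(·,t)‖ ≤ Ch(‖∂_{yy}ℓ₀‖ + ‖∂_{yy}ℓ(·,t)‖) + C‖∂_y(ℓ_{0,h} − ℓ₀)‖ + C√h (∫₀^t ‖∂_{yt}ℓ(·,s)‖² ds)^{1/2}, where ‖·‖ denotes the L²(0,Λ) norm. (Theorem 2: order-1/2 H¹ convergence of the discrete swimmer to the continuous one.) -/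

import Mathlib

open MeasureTheory Set

noncomputable section

/-- `v` belongs to the finite element space `V_h`: continuous on `[0,Λ]`,
affine on each subinterval `[y_j, y_{j+1}]` of the uniform partition with `N`
cells, and vanishing at `Λ`. -/
def IsVh (Λ : ℝ) (N : ℕ) (v : ℝ → ℝ) : Prop :=
  ContinuousOn v (Set.Icc 0 Λ) ∧
  (∀ j : ℕ, j < N →
    ∃ a b : ℝ, ∀ y ∈ Set.Icc ((j : ℝ) * (Λ / N)) (((j : ℝ) + 1) * (Λ / N)),
      v y = a * y + b) ∧
  v Λ = 0

/-!
Subtracting the heat equation at the nodes from the spring system shows that the nodal error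
solves a spring chain driven by a consistency residual, and the discrete energy (discrete
Dirichlet integral plus the Robin term at the left end) absorbs this residual through summation by
parts and Young's inequality. By Taylor's formula and the heat equation, the residual is
controlled by oscillations of `∂_t ℓ` over single cells, hence by `‖∂_{yt} ℓ‖`. Only at the left
end, where half a cell is missing, a term `(h / 2) ∂_t ℓ(0, t)` does not cancel; this is what
limits the order to `1/2`. Finally, `‖∂_y (ℓ_h - ℓ)‖²` is the discrete Dirichlet integral of the
nodal error plus the variances of `∂_y ℓ` on the cells, and the Poincaré–Wirtinger inequality
bounds those by `h² ‖∂_{yy} ℓ‖²`.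
-/

section Interval

variable {a b : ℝ} {f f' : ℝ → ℝ}

lemma integral_sq_sub_const (hab : a ≠ b) (hf : IntervalIntegrable f volume a b)
    (hf2 : IntervalIntegrable (fun x => f x ^ 2) volume a b) (c : ℝ) :
    ∫ x in a..b, (f x - c) ^ 2
      = (b - a) * ((⨍ x in a..b, f x) - c) ^ 2 + ∫ x in a..b, (f x - ⨍ x in a..b, f x) ^ 2 := by
  have expand (k : ℝ) : ∫ x in a..b, (f x - k) ^ 2
      = (∫ x in a..b, f x ^ 2) - 2 * k * (∫ x in a..b, f x) + (b - a) * k ^ 2 := by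
    simp_rw [show ∀ x, (f x - k) ^ 2 = f x ^ 2 - 2 * k * f x + k ^ 2 from fun x => by ring]
    rw [intervalIntegral.integral_add (hf2.sub (hf.const_mul _)) intervalIntegrable_const,
      intervalIntegral.integral_sub hf2 (hf.const_mul _), intervalIntegral.integral_const_mul,
      intervalIntegral.integral_const, smul_eq_mul]
  have mean : ∫ x in a..b, f x = (b - a) * ⨍ x in a..b, f x := by
    rw [interval_average_eq_div, mul_div_cancel₀ _ (sub_ne_zero.mpr hab.symm)]
  rw [expand, expand, mean]
  ring

lemma sq_integral_le (hf : IntervalIntegrable f volume a b)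
    (hf2 : IntervalIntegrable (fun x => f x ^ 2) volume a b) :
    (∫ x in a..b, f x) ^ 2 ≤ (b - a) * ∫ x in a..b, f x ^ 2 := by
  wlog hab : a ≤ b generalizing a b
  · rw [intervalIntegral.integral_symm b a, intervalIntegral.integral_symm b a]
    linarith [this hf.symm hf2.symm (le_of_not_ge hab)]
  rcases hab.eq_or_lt with rfl | hab
  · simp
  have ne : b - a ≠ 0 := (sub_pos.mpr hab).ne'
  have variance : (b - a) * (⨍ x in a..b, f x) ^ 2 ≤ ∫ x in a..b, f x ^ 2 := by
    have split := integral_sq_sub_const hab.ne hf hf2 0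
    simp only [sub_zero] at split
    rw [split]
    exact le_add_of_nonneg_right
      (intervalIntegral.integral_nonneg hab.le fun x _ => sq_nonneg _)
  calc (∫ x in a..b, f x) ^ 2 = (b - a) * ((b - a) * (⨍ x in a..b, f x) ^ 2) := by
        rw [interval_average_eq_div]; field_simp
    _ ≤ (b - a) * ∫ x in a..b, f x ^ 2 := by gcongr

lemma sq_sub_le_mul_integral_sq_deriv (hf : ∀ x ∈ uIcc a b, HasDerivAt f (f' x) x)
    (hf' : ContinuousOn f' (uIcc a b)) {x y : ℝ} (hx : x ∈ uIcc a b) (hy : y ∈ uIcc a b) :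
    (f x - f y) ^ 2 ≤ (b - a) * ∫ z in a..b, f' z ^ 2 := by
  wlog hab : a ≤ b generalizing a b
  · rw [intervalIntegral.integral_symm b a]
    rw [uIcc_comm] at hf hf' hx hy
    linarith [this hf hf' hx hy (le_of_not_ge hab)]
  wlog hyx : y ≤ x generalizing x y
  · rw [sub_sq_comm]
    exact this hy hx (le_of_not_ge hyx)
  have sub : uIcc y x ⊆ uIcc a b := uIcc_subset_uIcc hy hx
  rw [uIcc_of_le hab] at hx hy
  calc (f x - f y) ^ 2 = (∫ z in y..x, f' z) ^ 2 := by
        rw [intervalIntegral.integral_eq_sub_of_hasDerivAt (fun z hz => hf z (sub hz))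
          (hf'.mono sub).intervalIntegrable]
    _ ≤ (x - y) * ∫ z in y..x, f' z ^ 2 :=
        sq_integral_le (hf'.mono sub).intervalIntegrable ((hf'.pow 2).mono sub).intervalIntegrable
    _ ≤ (b - a) * ∫ z in a..b, f' z ^ 2 := by
        have mono : ∫ z in y..x, f' z ^ 2 ≤ ∫ z in a..b, f' z ^ 2 :=
          intervalIntegral.integral_mono_interval hy.1 hyx hx.2
            (ae_of_all _ fun z => sq_nonneg _) (hf'.pow 2).intervalIntegrable
        have nonneg : 0 ≤ ∫ z in y..x, f' z ^ 2 :=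
          intervalIntegral.integral_nonneg hyx fun z _ => sq_nonneg _
        gcongr ?_ * ?_
        exact sub_le_sub hx.2 hy.1

lemma integral_sq_sub_average_le (hab : a ≤ b) (hf : ∀ x ∈ uIcc a b, HasDerivAt f (f' x) x)
    (hf' : ContinuousOn f' (uIcc a b)) :
    ∫ x in a..b, (f x - ⨍ x in a..b, f x) ^ 2 ≤ (b - a) ^ 2 * ∫ x in a..b, f' x ^ 2 := by
  rcases hab.eq_or_lt with rfl | hlt
  · simp
  have cont : ContinuousOn f (uIcc a b) := fun x hx => (hf x hx).continuousAt.continuousWithinAt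
  obtain ⟨ξ, hξ, mean⟩ := exists_eq_interval_average hlt.ne cont
  rw [← mean]
  calc ∫ x in a..b, (f x - f ξ) ^ 2
      ≤ ∫ _ in a..b, (b - a) * ∫ z in a..b, f' z ^ 2 :=
        intervalIntegral.integral_mono_on hab
          ((cont.sub continuousOn_const).pow 2).intervalIntegrable intervalIntegrable_const
          fun x hx => sq_sub_le_mul_integral_sq_deriv hf hf' (Icc_subset_uIcc hx)
            (uIoo_subset_uIcc_self hξ)
    _ = (b - a) ^ 2 * ∫ x in a..b, f' x ^ 2 := by
        rw [intervalIntegral.integral_const, smul_eq_mul]; ring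

lemma exists_sub_eq_deriv_mul_add (hf : ContDiff ℝ 2 f) (hab : a ≠ b) :
    ∃ ξ ∈ uIoo a b, f b - f a
      = deriv f a * (b - a) + deriv (deriv f) ξ * (b - a) ^ 2 / 2 := by
  obtain ⟨ξ, hξ, taylor⟩ := taylor_mean_remainder_lagrange_iteratedDeriv (n := 1) hab
    (hf.of_le (by norm_num)).contDiffOn
  refine ⟨ξ, hξ, ?_⟩
  have hda : derivWithin f (uIcc a b) a = deriv f a :=
    ((hf.differentiable two_ne_zero) a).derivWithin (uniqueDiffOn_uIcc hab a left_mem_uIcc)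
  simp only [taylorWithinEval_succ, taylor_within_zero_eval, Nat.cast_zero, zero_add,
    Nat.factorial_zero, Nat.cast_one, mul_one, inv_one, pow_one, one_mul, iteratedDerivWithin_one,
    hda, smul_eq_mul, Nat.reduceAdd, iteratedDeriv_succ, iteratedDeriv_zero, Nat.factorial_two,
    Nat.cast_ofNat] at taylor
  linarith

lemma integral_sq_deriv_affine_sub (hab : a < b) (hf : ContDiff ℝ 1 f) {v : ℝ → ℝ} {m c : ℝ}
    (hv : ∀ x ∈ Icc a b, v x = m * x + c) :
    IntervalIntegrable (fun x => deriv (fun y => v y - f y) x ^ 2) volume a b ∧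
      ∫ x in a..b, deriv (fun y => v y - f y) x ^ 2
        = ((v b - f b) - (v a - f a)) ^ 2 / (b - a)
          + ∫ x in a..b, (deriv f x - ⨍ x in a..b, deriv f x) ^ 2 := by
  have cont : Continuous (deriv f) := hf.continuous_deriv le_rfl
  have deriv_sq : EqOn (fun x => (deriv f x - m) ^ 2)
      (fun x => deriv (fun y => v y - f y) x ^ 2) (uIoo a b) := by
    intro x hx
    rw [uIoo_of_le hab.le] at hx
    have hvx : HasDerivAt v m x := by
      have affine : HasDerivAt (fun y => m * y + c) m x := by
        simpa using ((hasDerivAt_id x).const_mul m).add_const c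
      refine affine.congr_of_eventuallyEq ?_
      filter_upwards [Icc_mem_nhds hx.1 hx.2] using hv
    have hfx := (hf.differentiable one_ne_zero x).hasDerivAt
    simp only [(hvx.fun_sub hfx).deriv]
    ring
  have average : (⨍ x in a..b, deriv f x) = (f b - f a) / (b - a) := by
    rw [interval_average_eq_div, intervalIntegral.integral_deriv_eq_sub
      (fun x _ => hf.differentiable one_ne_zero x) (cont.intervalIntegrable _ _)]
  have slope : v b - v a = m * (b - a) := by
    rw [hv b (right_mem_Icc.mpr hab.le), hv a (left_mem_Icc.mpr hab.le)]; ring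
  constructor
  · exact (Continuous.intervalIntegrable (by fun_prop) a b).congr_uIoo deriv_sq
  · rw [← intervalIntegral.integral_congr_uIoo deriv_sq,
      integral_sq_sub_const hab.ne (cont.intervalIntegrable _ _)
        ((cont.pow 2).intervalIntegrable _ _), average,
      show (v b - f b) - (v a - f a) = m * (b - a) - (f b - f a) by rw [← slope]; ring]
    have := (sub_pos.mpr hab).ne'
    field_simp
    ring

end Interval

section Mesh

variable {h : ℝ} {N : ℕ} {f g v : ℝ → ℝ}

lemma sum_integral_cells {F : ℝ → ℝ}
    (hF : ∀ j < N, IntervalIntegrable F volume (j * h) ((j + 1) * h)) :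
    ∑ j ∈ Finset.range N, ∫ x in (j * h)..((j + 1) * h), F x = ∫ x in 0..(N * h), F x := by
  have sum := intervalIntegral.sum_integral_adjacent_intervals (f := F) (μ := volume)
    (a := fun k : ℕ => (k : ℝ) * h) (n := N) (fun j hj => by exact_mod_cast hF j hj)
  simpa only [Nat.cast_add, Nat.cast_one, Nat.cast_zero, zero_mul] using sum

lemma cell_length (h : ℝ) (j : ℕ) : ((j : ℝ) + 1) * h - j * h = h := by ring

lemma cell_lt (hh : 0 < h) (j : ℕ) : (j : ℝ) * h < (j + 1) * h := by
  gcongr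
  exact lt_add_one _

/-- Squared `L²` norm of the derivative of the piecewise affine function that takes the value
`w j` at the node `j * h`, for `j ≤ N`. -/
def dirichletSum (h : ℝ) (N : ℕ) (w : ℕ → ℝ) : ℝ :=
  (∑ j ∈ Finset.range N, (w (j + 1) - w j) ^ 2) / h

lemma dirichletSum_congr {w z : ℕ → ℝ} (hwz : ∀ j ≤ N, w j = z j) :
    dirichletSum h N w = dirichletSum h N z := by
  rw [dirichletSum, dirichletSum]
  congr 1
  refine Finset.sum_congr rfl fun j hj => ?_
  have hj : j < N := Finset.mem_range.mp hj
  rw [hwz j hj.le, hwz (j + 1) hj]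

lemma integral_sq_deriv_piecewise_affine_sub (hh : 0 < h) (hf : ContDiff ℝ 1 f)
    (hv : ∀ j < N, ∃ m c : ℝ, ∀ x ∈ Icc (j * h) ((j + 1) * h), v x = m * x + c) :
    ∫ x in 0..(N * h), deriv (fun y => v y - f y) x ^ 2
      = dirichletSum h N (fun j => v (j * h) - f (j * h))
        + ∑ j ∈ Finset.range N, ∫ x in (j * h)..((j + 1) * h),
            (deriv f x - ⨍ y in (j * h)..((j + 1) * h), deriv f y) ^ 2 := by
  choose! m c hv using hv
  have cell (j : ℕ) (hj : j < N) := integral_sq_deriv_affine_sub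
    (cell_lt hh j) hf (hv j hj)
  rw [← sum_integral_cells fun j hj => (cell j hj).1, dirichletSum, Finset.sum_div,
    ← Finset.sum_add_distrib]
  refine Finset.sum_congr rfl fun j hj => ?_
  rw [(cell j (Finset.mem_range.mp hj)).2, cell_length]
  push_cast
  rfl

lemma dirichletSum_le_integral_sq_deriv (hh : 0 < h) (hf : ContDiff ℝ 1 f)
    (hv : ∀ j < N, ∃ m c : ℝ, ∀ x ∈ Icc (j * h) ((j + 1) * h), v x = m * x + c) :
    dirichletSum h N (fun j => v (j * h) - f (j * h))
      ≤ ∫ x in 0..(N * h), deriv (fun y => v y - f y) x ^ 2 := by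
  rw [integral_sq_deriv_piecewise_affine_sub hh hf hv]
  exact le_add_of_nonneg_right <| Finset.sum_nonneg fun j _ =>
    intervalIntegral.integral_nonneg (cell_lt hh j).le fun x _ => sq_nonneg _

lemma integral_sq_deriv_le_dirichletSum_add (hh : 0 < h) (hf : ContDiff ℝ 2 f)
    (hv : ∀ j < N, ∃ m c : ℝ, ∀ x ∈ Icc (j * h) ((j + 1) * h), v x = m * x + c) :
    ∫ x in 0..(N * h), deriv (fun y => v y - f y) x ^ 2
      ≤ dirichletSum h N (fun j => v (j * h) - f (j * h))
        + h ^ 2 * ∫ x in 0..(N * h), deriv (deriv f) x ^ 2 := by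
  have hf' : ContDiff ℝ 1 (deriv f) := hf.deriv'
  have cont : Continuous (deriv (deriv f)) := hf'.continuous_deriv le_rfl
  rw [integral_sq_deriv_piecewise_affine_sub hh (hf.of_le one_le_two) hv,
    ← sum_integral_cells (F := fun x => deriv (deriv f) x ^ 2)
      fun j _ => (cont.pow 2).intervalIntegrable _ _,
    Finset.mul_sum]
  gcongr with j
  have poincare := integral_sq_sub_average_le (cell_lt hh j).le
    (fun x _ => (hf'.differentiable one_ne_zero x).hasDerivAt) cont.continuousOn
  rwa [cell_length] at poincare

lemma sq_le_mul_dirichletSum {w : ℕ → ℝ} (hh : 0 < h) (hw : w N = 0) :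
    w 0 ^ 2 ≤ N * h * dirichletSum h N w := by
  calc w 0 ^ 2 = (∑ j ∈ Finset.range N, (w (j + 1) - w j)) ^ 2 := by
        rw [Finset.sum_range_sub, hw]; ring
    _ ≤ N * ∑ j ∈ Finset.range N, (w (j + 1) - w j) ^ 2 := by
        simpa only [Finset.card_range] using sq_sum_le_card_mul_sum_sq (s := Finset.range N)
          (f := fun j => w (j + 1) - w j)
    _ = N * h * dirichletSum h N w := by
        rw [dirichletSum]; field_simp

/-- Flux through the springs: `D` times the slope of `w` across the cell `[j * h, (j + 1) * h]` is
stored at index `j + 1`, while index `0` holds the flux `b` prescribed at the left end. -/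
def nodalFlux (D h b : ℝ) (w : ℕ → ℝ) : ℕ → ℝ
  | 0 => b
  | j + 1 => D * (w (j + 1) - w j) / h

lemma sq_diffQuot_sub_le {x k D : ℝ} (hk : k ≠ 0) (hf : ContDiff ℝ 2 f) (hg : ContDiff ℝ 1 g)
    (hfg : ∀ y ∈ uIoo x (x + k), g y = D * deriv (deriv f) y) :
    (D * (f (x + k) - f x) / k - D * deriv f x - k / 2 * g x) ^ 2
      ≤ k ^ 3 / 4 * ∫ y in x..(x + k), deriv g y ^ 2 := by
  obtain ⟨ξ, hξ, taylor⟩ := exists_sub_eq_deriv_mul_add hf (a := x) (b := x + k) (by simpa using hk)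
  have osc := sq_sub_le_mul_integral_sq_deriv
    (fun y _ => (hg.differentiable one_ne_zero y).hasDerivAt)
    (hg.continuous_deriv le_rfl).continuousOn (uIoo_subset_uIcc_self hξ) left_mem_uIcc
  rw [add_sub_cancel_left] at taylor osc
  calc (D * (f (x + k) - f x) / k - D * deriv f x - k / 2 * g x) ^ 2
      = k ^ 2 / 4 * (g ξ - g x) ^ 2 := by
        rw [taylor, hfg ξ hξ]
        field_simp
        ring
    _ ≤ k ^ 2 / 4 * (k * ∫ y in x..(x + k), deriv g y ^ 2) := by gcongr
    _ = k ^ 3 / 4 * ∫ y in x..(x + k), deriv g y ^ 2 := by ring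

lemma sq_boundary_flux_jump_sub_le {x D : ℝ} (hh : 0 < h) (hf : ContDiff ℝ 2 f)
    (hg : ContDiff ℝ 1 g) (hfg : ∀ y ∈ Ioo x (x + h), g y = D * deriv (deriv f) y) :
    (D * (f (x + h) - f x) / h - D * deriv f x - h * g x) ^ 2
      ≤ h ^ 3 / 2 * (∫ y in x..(x + h), deriv g y ^ 2) + h ^ 2 / 2 * g x ^ 2 := by
  have right := sq_diffQuot_sub_le (x := x) (D := D) hh.ne' hf hg
    (by rwa [uIoo_of_le (by linarith)])
  set p := D * (f (x + h) - f x) / h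
  calc (p - D * deriv f x - h * g x) ^ 2
      = ((p - D * deriv f x - h / 2 * g x) + -(h / 2 * g x)) ^ 2 := by ring
    _ ≤ 2 * ((p - D * deriv f x - h / 2 * g x) ^ 2 + (-(h / 2 * g x)) ^ 2) := add_sq_le
    _ ≤ 2 * (h ^ 3 / 4 * (∫ y in x..(x + h), deriv g y ^ 2) + (-(h / 2 * g x)) ^ 2) := by
        gcongr
    _ = h ^ 3 / 2 * (∫ y in x..(x + h), deriv g y ^ 2) + h ^ 2 / 2 * g x ^ 2 := by ring

lemma sq_interior_flux_jump_sub_le {x D : ℝ} (hh : 0 < h) (hf : ContDiff ℝ 2 f)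
    (hg : ContDiff ℝ 1 g) (hfg : ∀ y ∈ Ioo (x - h) (x + h), g y = D * deriv (deriv f) y) :
    (D * (f (x + h) - f x) / h - D * (f x - f (x - h)) / h - h * g x) ^ 2
      ≤ h ^ 3 / 2 * ((∫ y in x..(x + h), deriv g y ^ 2) + ∫ y in (x - h)..x, deriv g y ^ 2) := by
  have right := sq_diffQuot_sub_le (x := x) hh.ne' hf hg fun y hy => by
    rw [uIoo_of_le (by linarith)] at hy
    exact hfg y (Ioo_subset_Ioo_left (by linarith) hy)
  have left := sq_diffQuot_sub_le (x := x) (neg_ne_zero.mpr hh.ne') hf hg fun y hy => by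
    rw [uIoo_of_ge (by linarith), ← sub_eq_add_neg] at hy
    exact hfg y (Ioo_subset_Ioo_right (by linarith) hy)
  rw [← sub_eq_add_neg, intervalIntegral.integral_symm (x - h) x,
    show D * (f (x - h) - f x) / -h = D * (f x - f (x - h)) / h by field_simp; ring] at left
  set p := D * (f (x + h) - f x) / h
  set q := D * (f x - f (x - h)) / h
  calc (p - q - h * g x) ^ 2
      = ((p - D * deriv f x - h / 2 * g x) + -(q - D * deriv f x - -h / 2 * g x)) ^ 2 := by ring
    _ ≤ 2 * ((p - D * deriv f x - h / 2 * g x) ^ 2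
          + (-(q - D * deriv f x - -h / 2 * g x)) ^ 2) := add_sq_le
    _ ≤ h ^ 3 / 2
          * ((∫ y in x..(x + h), deriv g y ^ 2) + ∫ y in (x - h)..x, deriv g y ^ 2) := by
        rw [neg_sq]; linarith

lemma sq_nodalFlux_jump_sub_le {D b : ℝ} (hh : 0 < h) (hf : ContDiff ℝ 2 f)
    (hg : ContDiff ℝ 1 g) (hfg : ∀ y ∈ Ioo 0 (N * h), g y = D * deriv (deriv f) y)
    {j : ℕ} (hj : j + 1 < N) :
    (nodalFlux D h b (fun i => f (i * h)) (j + 1 + 1)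
        - nodalFlux D h b (fun i => f (i * h)) (j + 1) - h * g ((j + 1 : ℕ) * h)) ^ 2
      ≤ h ^ 3 / 2 * ((∫ y in ((j + 1 : ℕ) * h)..(((j + 1 : ℕ) + 1) * h), deriv g y ^ 2)
          + ∫ y in (j * h)..((j + 1) * h), deriv g y ^ 2) := by
  have left_node : ((j : ℝ) + 1) * h - h = j * h := by ring
  have right_node : ((j : ℝ) + 1) * h + h = (j + 1 + 1) * h := by ring
  have bound := sq_interior_flux_jump_sub_le (x := (j + 1) * h) hh hf hg fun y hy => by
    rw [left_node, right_node] at hy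
    have last : (j : ℝ) + 1 + 1 ≤ N := by exact_mod_cast hj
    have nonneg : 0 ≤ (j : ℝ) * h := by positivity
    exact hfg y ⟨nonneg.trans_lt hy.1, hy.2.trans_le (by gcongr)⟩
  rw [left_node, right_node] at bound
  simpa only [nodalFlux, Nat.cast_add, Nat.cast_one] using bound

lemma sq_nodalFlux_first_jump_sub_le {D : ℝ} (hh : 0 < h) (hN : 0 < N) (hf : ContDiff ℝ 2 f)
    (hg : ContDiff ℝ 1 g) (hfg : ∀ y ∈ Ioo 0 (N * h), g y = D * deriv (deriv f) y)
    (hgN : g (N * h) = 0) :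
    (nodalFlux D h (D * deriv f 0) (fun i => f (i * h)) 1
        - nodalFlux D h (D * deriv f 0) (fun i => f (i * h)) 0 - h * g 0) ^ 2
      ≤ h ^ 3 / 2 * (∫ y in 0..h, deriv g y ^ 2)
          + h ^ 2 / 2 * (N * h * ∫ y in 0..(N * h), deriv g y ^ 2) := by
  have h_le : h ≤ N * h := le_mul_of_one_le_left hh.le (by exact_mod_cast hN)
  have end_sq : g 0 ^ 2 ≤ N * h * ∫ y in 0..(N * h), deriv g y ^ 2 := by
    have osc := sq_sub_le_mul_integral_sq_deriv (a := 0) (b := N * h)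
      (fun y _ => (hg.differentiable one_ne_zero y).hasDerivAt)
      (hg.continuous_deriv le_rfl).continuousOn left_mem_uIcc right_mem_uIcc
    simpa only [hgN, sub_zero] using osc
  have bound := sq_boundary_flux_jump_sub_le (x := 0) hh hf hg fun y hy =>
    hfg y (Ioo_subset_Ioo_right (by simpa only [zero_add] using h_le) hy)
  simp only [zero_add] at bound
  simp only [nodalFlux, Nat.cast_zero, Nat.cast_one, zero_mul, zero_add, one_mul]
  exact bound.trans (by gcongr)

lemma sum_sq_nodalFlux_jump_sub_le {D : ℝ} (hh : 0 < h) (hf : ContDiff ℝ 2 f)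
    (hg : ContDiff ℝ 1 g) (hfg : ∀ y ∈ Ioo 0 (N * h), g y = D * deriv (deriv f) y)
    (hgN : g (N * h) = 0) :
    ∑ j ∈ Finset.range N, (nodalFlux D h (D * deriv f 0) (fun i => f (i * h)) (j + 1)
        - nodalFlux D h (D * deriv f 0) (fun i => f (i * h)) j - h * g (j * h)) ^ 2
      ≤ 2 * h ^ 2 * (N * h) * ∫ y in 0..(N * h), deriv g y ^ 2 := by
  obtain _ | n := N
  · simp
  set q := nodalFlux D h (D * deriv f 0) (fun i => f (i * h))
  set L := ((n + 1 : ℕ) : ℝ) * h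
  set I := ∫ y in 0..L, deriv g y ^ 2
  let J (j : ℕ) : ℝ := ∫ y in (j * h)..((j + 1) * h), deriv g y ^ 2
  have J_nonneg (j : ℕ) : 0 ≤ J j :=
    intervalIntegral.integral_nonneg (cell_lt hh j).le fun y _ => sq_nonneg _
  have sum_J : ∑ j ∈ Finset.range (n + 1), J j = I := sum_integral_cells fun j _ =>
    ((hg.continuous_deriv le_rfl).pow 2).intervalIntegrable _ _
  have I_nonneg : 0 ≤ I := sum_J ▸ Finset.sum_nonneg fun j _ => J_nonneg j
  have sum_J_le : ∑ j ∈ Finset.range n, J j ≤ I := by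
    rw [← sum_J, Finset.sum_range_succ]
    exact le_add_of_nonneg_right (J_nonneg n)
  have h_le : h ≤ L := le_mul_of_one_le_left hh.le (by exact_mod_cast n.succ_pos)
  calc ∑ j ∈ Finset.range (n + 1), (q (j + 1) - q j - h * g (j * h)) ^ 2
      ≤ ∑ j ∈ Finset.range n, h ^ 3 / 2 * (J (j + 1) + J j)
          + (h ^ 3 / 2 * J 0 + h ^ 2 / 2 * (L * I)) := by
        rw [Finset.sum_range_succ']
        gcongr with j hj
        · exact sq_nodalFlux_jump_sub_le hh hf hg hfg (by simpa using hj)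
        · simpa only [J, Nat.cast_zero, zero_mul, zero_add, one_mul] using
            sq_nodalFlux_first_jump_sub_le hh n.succ_pos hf hg hfg hgN
    _ = h ^ 2 * h / 2 * (∑ j ∈ Finset.range (n + 1), J j + ∑ j ∈ Finset.range n, J j)
          + h ^ 2 / 2 * (L * I) := by
        rw [Finset.sum_range_succ', ← Finset.mul_sum, Finset.sum_add_distrib]; ring
    _ ≤ h ^ 2 * h / 2 * (I + I) + h ^ 2 / 2 * (L * I) := by
        rw [sum_J]; gcongr
    _ ≤ h ^ 2 * L / 2 * (I + I) + h ^ 2 * L * I := by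
        have : 0 ≤ h ^ 2 * L * I := by positivity
        gcongr ?_ + ?_
        · gcongr
        · linarith
    _ = 2 * h ^ 2 * L * I := by ring

end Mesh

section Energy

variable {D β h : ℝ} {N : ℕ}

/-- Energy of the spring chain with node values `w`: the springs contribute `D` times the discrete
Dirichlet integral, and the Robin condition at the left end contributes `β * w 0 ^ 2`. -/
def springEnergy (D β h : ℝ) (N : ℕ) (w : ℕ → ℝ) : ℝ :=
  D * dirichletSum h N w + β * w 0 ^ 2

lemma hasDerivAt_springEnergy {e : ℕ → ℝ → ℝ} {e' : ℕ → ℝ} {t : ℝ}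
    (he : ∀ j ≤ N, HasDerivAt (e j) (e' j) t) :
    HasDerivAt (fun s => springEnergy D β h N (fun j => e j s))
      (2 * (∑ j ∈ Finset.range N,
          nodalFlux D h (β * e 0 t) (fun i => e i t) (j + 1) * (e' (j + 1) - e' j)
        + nodalFlux D h (β * e 0 t) (fun i => e i t) 0 * e' 0)) t := by
  have springs := HasDerivAt.fun_sum (u := Finset.range N) fun j hj =>
    ((he (j + 1) (Finset.mem_range.mp hj)).fun_sub
      (he j (Finset.mem_range.mp hj).le)).fun_pow 2
  refine (((springs.div_const h).const_mul D).fun_add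
    (((he 0 N.zero_le).fun_pow 2).const_mul β)).congr_deriv ?_
  simp only [nodalFlux, mul_add, Finset.mul_sum, Finset.sum_div]
  congr 1
  · refine Finset.sum_congr rfl fun j _ => ?_
    ring
  · ring

lemma two_mul_sum_mul_sub_add_le {x p r : ℕ → ℝ} (hh : 0 < h) (hx : x N = 0)
    (balance : ∀ j < N, h * x j = p (j + 1) - p j + r j) :
    2 * (∑ j ∈ Finset.range N, p (j + 1) * (x (j + 1) - x j) + p 0 * x 0)
      ≤ (∑ j ∈ Finset.range N, r j ^ 2) / (2 * h) := by
  have by_parts : ∑ j ∈ Finset.range N, p (j + 1) * (x (j + 1) - x j) + p 0 * x 0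
      = ∑ j ∈ Finset.range N, (r j - h * x j) * x j := by
    calc _ = ∑ j ∈ Finset.range N, ((p (j + 1) * x (j + 1) - p j * x j) + (r j - h * x j) * x j)
          + p 0 * x 0 := by
          congr 1
          refine Finset.sum_congr rfl fun j hj => ?_
          rw [balance j (Finset.mem_range.mp hj)]
          ring
      _ = ∑ j ∈ Finset.range N, (r j - h * x j) * x j := by
          rw [Finset.sum_add_distrib, Finset.sum_range_sub (fun j => p j * x j), hx]
          ring
  rw [by_parts, Finset.mul_sum, Finset.sum_div]
  gcongr with j
  rw [le_div_iff₀ (by positivity)]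
  linarith [sq_nonneg (r j - 2 * (h * x j))]

lemma springEnergy_le_add_integral {e e' r : ℕ → ℝ → ℝ} {ρ : ℝ → ℝ} {t : ℝ} (hh : 0 < h)
    (ht : 0 ≤ t) (cont : ∀ j ≤ N, ContinuousOn (e j) (Icc 0 t))
    (deriv_e : ∀ j ≤ N, ∀ s ∈ Ioo 0 t, HasDerivAt (e j) (e' j s) s)
    (clamped : ∀ s ∈ Ioo 0 t, e' N s = 0)
    (balance : ∀ s ∈ Ioo 0 t, ∀ j < N, h * e' j s
      = nodalFlux D h (β * e 0 s) (fun i => e i s) (j + 1)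
        - nodalFlux D h (β * e 0 s) (fun i => e i s) j + r j s)
    (residual : ∀ s ∈ Ioo 0 t, ∑ j ∈ Finset.range N, r j s ^ 2 ≤ 2 * h * ρ s)
    (hρ : IntegrableOn ρ (Icc 0 t)) :
    springEnergy D β h N (fun j => e j t)
      ≤ springEnergy D β h N (fun j => e j 0) + ∫ s in 0..t, ρ s := by
  rw [← sub_le_iff_le_add']
  refine intervalIntegral.sub_le_integral_of_hasDeriv_right_of_le ht ?_
    (fun s hs => (hasDerivAt_springEnergy fun j hj => deriv_e j hj s hs).hasDerivWithinAt) hρ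
    fun s hs => ?_
  · unfold springEnergy dirichletSum
    refine ((continuousOn_const.mul (ContinuousOn.div_const ?_ h)).add
      (continuousOn_const.mul ((cont 0 N.zero_le).pow 2)))
    exact continuousOn_finsetSum _ fun j hj =>
      ((cont (j + 1) (Finset.mem_range.mp hj)).sub (cont j (Finset.mem_range.mp hj).le)).pow 2
  · calc _ ≤ (∑ j ∈ Finset.range N, r j s ^ 2) / (2 * h) :=
        two_mul_sum_mul_sub_add_le hh (clamped s hs) (balance s hs)
      _ ≤ ρ s := by
        rw [div_le_iff₀' (by positivity)]
        exact residual s hs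

end Energy

lemma contDiff_deriv_param {E : Type*} [NormedAddCommGroup E] [NormedSpace ℝ E]
    {f : E → ℝ → ℝ} {g : E → ℝ} {m n : WithTop ℕ∞} (hf : ContDiff ℝ m (Function.uncurry f))
    (hg : ContDiff ℝ n g) (hnm : n + 1 ≤ m) : ContDiff ℝ n fun x => deriv (f x) (g x) :=
  (hf.fderiv hg hnm).clm_apply contDiff_const

/-- `u y t` is a classical solution of the heat equation with diffusivity `D` on `(0, L)`, with the
Robin condition `D ∂_y u - β u = g` at the left end and the Dirichlet condition `u = 0` at the right
end. Regularity is imposed on the whole plane so that one-sided derivatives do not arise. -/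
structure IsRobinHeatSolution (L D β : ℝ) (g : ℝ → ℝ) (u : ℝ → ℝ → ℝ) : Prop where
  contDiff : ContDiff ℝ 2 fun p : ℝ × ℝ => u p.1 p.2
  heat : ∀ y ∈ Ioo 0 L, ∀ t > 0,
    deriv (fun s => u y s) t = D * deriv (fun x => deriv (fun x' => u x' t) x) y
  robin : ∀ t > 0, D * deriv (fun x => u x t) 0 - β * u 0 t = g t
  dirichlet : ∀ t > 0, u L t = 0

namespace IsRobinHeatSolution

variable {L D β : ℝ} {g : ℝ → ℝ} {u : ℝ → ℝ → ℝ} (hu : IsRobinHeatSolution L D β g u)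
include hu

lemma contDiff_space (t : ℝ) : ContDiff ℝ 2 fun y => u y t :=
  hu.contDiff.comp (contDiff_id.prodMk contDiff_const)

lemma contDiff_time (y : ℝ) : ContDiff ℝ 2 (u y) :=
  hu.contDiff.comp (contDiff_const.prodMk contDiff_id)

lemma contDiff_deriv_time : ContDiff ℝ 1 fun p : ℝ × ℝ => deriv (fun s => u p.1 s) p.2 :=
  contDiff_deriv_param (hu.contDiff.comp ((contDiff_fst.comp contDiff_fst).prodMk contDiff_snd))
    contDiff_snd (by norm_num)

lemma continuous_integral_sq_deriv_deriv_time :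
    Continuous fun t => ∫ y in 0..L, deriv (fun x => deriv (fun s => u x s) t) y ^ 2 := by
  have mixed : Continuous fun p : ℝ × ℝ => deriv (fun x => deriv (fun s => u x s) p.1) p.2 :=
    (contDiff_deriv_param (n := 0) (hu.contDiff_deriv_time.comp
      (contDiff_snd.prodMk (contDiff_fst.comp contDiff_fst))) contDiff_snd (by norm_num)).continuous
  exact intervalIntegral.continuous_parametric_intervalIntegral_of_continuous'
    (mixed.pow 2) 0 L

lemma dirichlet_of_nonneg {t : ℝ} (ht : 0 ≤ t) : u L t = 0 := by
  have closed : IsClosed {s | u L s = 0} :=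
    isClosed_eq (hu.contDiff_time L).continuous continuous_const
  have closure_sub := closure_minimal (fun s (hs : s ∈ Ioi 0) => hu.dirichlet s hs) closed
  rw [closure_Ioi] at closure_sub
  exact closure_sub ht

lemma deriv_time_right_end {t : ℝ} (ht : 0 < t) : deriv (fun s => u L s) t = 0 := by
  have zero : (fun s => u L s) =ᶠ[nhds t] fun _ => 0 := by
    filter_upwards [Ioi_mem_nhds ht] with s hs using hu.dirichlet s hs
  rw [zero.deriv_eq, deriv_const]

end IsRobinHeatSolution

/-- `x 1, …, x N` solve the system of `N` springs with mesh size `h`, forced by `g` at the left node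
and clamped at the right node `x (N + 1) = 0`; as in the paper, the node `y_j = (j - 1) * h` carries
the index `j`. -/
structure IsSpringChain (D β h : ℝ) (N : ℕ) (g : ℝ → ℝ) (x : ℕ → ℝ → ℝ) : Prop where
  continuousOn : ∀ j, 1 ≤ j → j ≤ N → ContinuousOn (x j) (Ici 0)
  differentiableAt : ∀ j, 1 ≤ j → j ≤ N → ∀ t > 0, DifferentiableAt ℝ (x j) t
  interior : ∀ j, 2 ≤ j → j ≤ N → ∀ t > 0,
    deriv (x j) t = D * (x (j - 1) t - 2 * x j t + x (j + 1) t) / h ^ 2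
  left_end : ∀ t > 0, h * deriv (x 1) t = D * (x 2 t - x 1 t) / h - β * x 1 t - g t
  right_end : ∀ t ≥ 0, x (N + 1) t = 0

namespace IsSpringChain

variable {D β h : ℝ} {N : ℕ} {g : ℝ → ℝ} {x : ℕ → ℝ → ℝ} (hx : IsSpringChain D β h N g x)
include hx

lemma continuousOn_succ {j : ℕ} (hj : j ≤ N) : ContinuousOn (x (j + 1)) (Ici 0) := by
  rcases hj.eq_or_lt with rfl | hj
  · exact continuousOn_const.congr hx.right_end
  · exact hx.continuousOn (j + 1) (Nat.le_add_left 1 j) hj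

lemma hasDerivAt_right_end {t : ℝ} (ht : 0 < t) : HasDerivAt (x (N + 1)) 0 t := by
  refine (hasDerivAt_const t 0).congr_of_eventuallyEq ?_
  filter_upwards [Ioi_mem_nhds ht] with s hs using hx.right_end s (le_of_lt hs)

lemma differentiableAt_succ {j : ℕ} (hj : j ≤ N) {t : ℝ} (ht : 0 < t) :
    DifferentiableAt ℝ (x (j + 1)) t := by
  rcases hj.eq_or_lt with rfl | hj
  · exact (hx.hasDerivAt_right_end ht).differentiableAt
  · exact hx.differentiableAt (j + 1) (Nat.le_add_left 1 j) hj t ht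

lemma mul_deriv_eq_nodalFlux_sub {j : ℕ} (hj : j < N) {t : ℝ} (ht : 0 < t) :
    h * deriv (x (j + 1)) t
      = nodalFlux D h (β * x 1 t + g t) (fun i => x (i + 1) t) (j + 1)
        - nodalFlux D h (β * x 1 t + g t) (fun i => x (i + 1) t) j := by
  obtain _ | j := j
  · rw [hx.left_end t ht, nodalFlux, nodalFlux]
    ring
  · rw [hx.interior (j + 2) (Nat.le_add_left 2 j) hj t ht, nodalFlux, nodalFlux,
      show j + 2 - 1 = j + 1 from rfl]
    field_simp
    ring

end IsSpringChain

section Convergence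

variable {D β h : ℝ} {N : ℕ} {g : ℝ → ℝ} {u : ℝ → ℝ → ℝ} {x : ℕ → ℝ → ℝ}

/-- Error at the node `j * h` and time `t`. Nodes are counted from `0` here, whereas the values `x`
of a spring chain are numbered from `1`. -/
def nodalError (h : ℝ) (x : ℕ → ℝ → ℝ) (u : ℝ → ℝ → ℝ) (j : ℕ) (t : ℝ) : ℝ :=
  x (j + 1) t - u (j * h) t

/-- Consistency residual: what a solution `u` of the heat equation leaves over in the equation of
the spring chain at the node `j * h`. -/
def consistencyResidual (D h : ℝ) (u : ℝ → ℝ → ℝ) (j : ℕ) (t : ℝ) : ℝ :=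
  nodalFlux D h (D * deriv (fun y => u y t) 0) (fun i => u (i * h) t) (j + 1)
    - nodalFlux D h (D * deriv (fun y => u y t) 0) (fun i => u (i * h) t) j
    - h * deriv (fun s => u (j * h) s) t

lemma nodalFlux_sub (b c : ℝ) (w z : ℕ → ℝ) (j : ℕ) :
    nodalFlux D h (b - c) (fun i => w i - z i) j = nodalFlux D h b w j - nodalFlux D h c z j := by
  cases j <;> simp only [nodalFlux]
  ring

lemma mul_deriv_nodalError_eq {L : ℝ} (hu : IsRobinHeatSolution L D β g u)
    (hx : IsSpringChain D β h N g x) {j : ℕ} (hj : j < N) {t : ℝ} (ht : 0 < t) :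
    h * (deriv (x (j + 1)) t - deriv (fun s => u (j * h) s) t)
      = nodalFlux D h (β * nodalError h x u 0 t) (fun i => nodalError h x u i t) (j + 1)
        - nodalFlux D h (β * nodalError h x u 0 t) (fun i => nodalError h x u i t) j
        + consistencyResidual D h u j t := by
  have boundary : β * nodalError h x u 0 t
      = (β * x 1 t + g t) - D * deriv (fun y => u y t) 0 := by
    rw [nodalError, Nat.cast_zero, zero_mul, zero_add]
    linarith [hu.robin t ht]
  rw [boundary]
  simp only [nodalError, nodalFlux_sub, consistencyResidual]
  rw [mul_sub, hx.mul_deriv_eq_nodalFlux_sub hj ht]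
  ring

lemma sum_sq_consistencyResidual_le (hh : 0 < h) (hu : IsRobinHeatSolution (N * h) D β g u) {t : ℝ}
    (ht : 0 < t) :
    ∑ j ∈ Finset.range N, consistencyResidual D h u j t ^ 2
      ≤ 2 * h ^ 2 * (N * h)
        * ∫ y in 0..(N * h), deriv (fun x => deriv (fun s => u x s) t) y ^ 2 := by
  have contDiff : ContDiff ℝ 1 fun y => deriv (fun s => u y s) t :=
    hu.contDiff_deriv_time.comp (contDiff_id.prodMk contDiff_const)
  simpa only [consistencyResidual] using sum_sq_nodalFlux_jump_sub_le hh (hu.contDiff_space t)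
    contDiff (fun y hy => hu.heat y hy t ht) (hu.deriv_time_right_end ht)

lemma springEnergy_nodalError_le (hh : 0 < h) (hu : IsRobinHeatSolution (N * h) D β g u)
    (hx : IsSpringChain D β h N g x) {t : ℝ} (ht : 0 ≤ t) :
    springEnergy D β h N (fun j => nodalError h x u j t)
      ≤ springEnergy D β h N (fun j => nodalError h x u j 0) + h * (N * h)
        * ∫ s in 0..t, ∫ y in 0..(N * h), deriv (fun x => deriv (fun τ => u x τ) s) y ^ 2 := by
  rw [← intervalIntegral.integral_const_mul]
  refine springEnergy_le_add_integral
    (e' := fun j s => deriv (x (j + 1)) s - deriv (fun τ => u (j * h) τ) s) hh ht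
    (fun j hj => ?_) (fun j hj s hs => ?_) (fun s hs => ?_)
    (fun s hs j hj => mul_deriv_nodalError_eq hu hx hj hs.1) (fun s hs => ?_) ?_
  · exact ((hx.continuousOn_succ hj).mono Icc_subset_Ici_self).sub
      (hu.contDiff_time _).continuous.continuousOn
  · exact (hx.differentiableAt_succ hj hs.1).hasDerivAt.sub
      ((hu.contDiff_time _).differentiable two_ne_zero s).hasDerivAt
  · rw [(hx.hasDerivAt_right_end hs.1).deriv, hu.deriv_time_right_end hs.1, sub_zero]
  · exact (sum_sq_consistencyResidual_le hh hu hs.1).trans_eq (by ring)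
  · exact (hu.continuous_integral_sq_deriv_deriv_time.const_mul _).integrableOn_Icc

lemma springEnergy_le_mul_dirichletSum {w : ℕ → ℝ} (hβ : 0 ≤ β) (hh : 0 < h) (hw : w N = 0) :
    springEnergy D β h N w ≤ (D + β * (N * h)) * dirichletSum h N w := by
  rw [springEnergy, add_mul, mul_assoc β]
  gcongr
  exact sq_le_mul_dirichletSum hh hw

lemma dirichletSum_nodalError_le (hD : 0 < D) (hβ : 0 ≤ β) (hh : 0 < h)
    (hu : IsRobinHeatSolution (N * h) D β g u) (hx : IsSpringChain D β h N g x) {t : ℝ}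
    (ht : 0 ≤ t) :
    dirichletSum h N (fun j => nodalError h x u j t)
      ≤ (1 + β * (N * h) / D) * dirichletSum h N (fun j => nodalError h x u j 0) + N * h / D * (h
        * ∫ s in 0..t, ∫ y in 0..(N * h), deriv (fun x => deriv (fun τ => u x τ) s) y ^ 2) := by
  have energy := springEnergy_nodalError_le hh hu hx ht
  have clamped : nodalError h x u N 0 = 0 := by
    rw [nodalError, hx.right_end 0 le_rfl, hu.dirichlet_of_nonneg le_rfl, sub_zero]
  have initial := springEnergy_le_mul_dirichletSum (D := D) (w := fun j => nodalError h x u j 0)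
    hβ hh clamped
  have boundary_nonneg : 0 ≤ β * nodalError h x u 0 t ^ 2 := by positivity
  set S := dirichletSum h N (fun j => nodalError h x u j t)
  set S₀ := dirichletSum h N (fun j => nodalError h x u j 0)
  set T := ∫ s in 0..t, ∫ y in 0..(N * h), deriv (fun x => deriv (fun τ => u x τ) s) y ^ 2
  calc S = D * S / D := (mul_div_cancel_left₀ S hD.ne').symm
    _ ≤ ((D + β * (N * h)) * S₀ + h * (N * h) * T) / D := by
        gcongr
        calc D * S ≤ springEnergy D β h N (fun j => nodalError h x u j t) :=
              le_add_of_nonneg_right boundary_nonneg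
          _ ≤ (D + β * (N * h)) * S₀ + h * (N * h) * T := energy.trans (by gcongr)
    _ = (1 + β * (N * h) / D) * S₀ + N * h / D * (h * T) := by field_simp

lemma integral_sq_deriv_sub_le {v v₀ : ℝ → ℝ} {t : ℝ} (hD : 0 < D) (hβ : 0 ≤ β) (hh : 0 < h)
    (hu : IsRobinHeatSolution (N * h) D β g u) (hx : IsSpringChain D β h N g x) (ht : 0 ≤ t)
    (hv₀ : ∀ j < N, ∃ m c : ℝ, ∀ y ∈ Icc (j * h) ((j + 1) * h), v₀ y = m * y + c)
    (hv₀x : ∀ j ≤ N, v₀ (j * h) = x (j + 1) 0)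
    (hv : ∀ j < N, ∃ m c : ℝ, ∀ y ∈ Icc (j * h) ((j + 1) * h), v y = m * y + c)
    (hvx : ∀ j ≤ N, v (j * h) = x (j + 1) t) :
    ∫ y in 0..(N * h), deriv (fun x => v x - u x t) y ^ 2
      ≤ h ^ 2 * (∫ y in 0..(N * h), deriv (fun x => deriv (fun x' => u x' t) x) y ^ 2)
        + (1 + β * (N * h) / D) * (∫ y in 0..(N * h), deriv (fun x => v₀ x - u x 0) y ^ 2)
        + N * h / D * (h
          * ∫ s in 0..t, ∫ y in 0..(N * h), deriv (fun x => deriv (fun τ => u x τ) s) y ^ 2) := by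
  have upper := integral_sq_deriv_le_dirichletSum_add hh (hu.contDiff_space t) hv
  have lower := dirichletSum_le_integral_sq_deriv hh ((hu.contDiff_space 0).of_le one_le_two) hv₀
  rw [dirichletSum_congr (z := fun j => nodalError h x u j t)
    fun j hj => by rw [hvx j hj, nodalError]] at upper
  rw [dirichletSum_congr (z := fun j => nodalError h x u j 0)
    fun j hj => by rw [hv₀x j hj, nodalError]] at lower
  refine upper.trans ?_
  rw [add_comm (dirichletSum _ _ _), add_assoc]
  gcongr
  exact (dirichletSum_nodalError_le hD hβ hh hu hx ht).trans (by gcongr)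

lemma sqrt_add_le_add_sqrt {a b : ℝ} (ha : 0 ≤ a) (hb : 0 ≤ b) : √(a + b) ≤ √a + √b := by
  refine Real.sqrt_le_iff.mpr ⟨by positivity, ?_⟩
  rw [add_sq, Real.sq_sqrt ha, Real.sq_sqrt hb]
  linarith [mul_nonneg (Real.sqrt_nonneg a) (Real.sqrt_nonneg b)]

lemma sqrt_le_mul_sqrt_add_mul_sqrt {X Y Z T C : ℝ} (hC : 1 ≤ C) (hh : 0 ≤ h) (hY : 0 ≤ Y)
    (hZ : 0 ≤ Z) (hT : 0 ≤ T) (hX : X ≤ h ^ 2 * Y + C * Z + C * (h * T)) :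
    √X ≤ C * h * √Y + C * √Z + C * √h * √T := by
  have hC₀ : 0 ≤ C := zero_le_one.trans hC
  have le_sq : C ≤ C ^ 2 := le_self_pow₀ hC two_ne_zero
  calc √X ≤ √((C * h) ^ 2 * Y + C ^ 2 * Z + C ^ 2 * (h * T)) := by
        refine Real.sqrt_le_sqrt (hX.trans ?_)
        gcongr
        exact le_mul_of_one_le_left hh hC
    _ ≤ √((C * h) ^ 2 * Y) + √(C ^ 2 * Z) + √(C ^ 2 * (h * T)) :=
        (sqrt_add_le_add_sqrt (by positivity) (by positivity)).trans
          (add_le_add_left (sqrt_add_le_add_sqrt (by positivity) (by positivity)) _)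
    _ = C * h * √Y + C * √Z + C * √h * √T := by
        rw [Real.sqrt_mul (sq_nonneg _), Real.sqrt_mul (sq_nonneg _), Real.sqrt_mul (sq_nonneg _),
          Real.sqrt_sq (by positivity), Real.sqrt_sq hC₀, Real.sqrt_mul hh, mul_assoc C √h]

lemma IsVh.exists_affine {v : ℝ → ℝ} (hN : 0 < N) (hv : IsVh (N * h) N v) :
    ∀ j < N, ∃ m c : ℝ, ∀ y ∈ Icc (j * h) ((j + 1) * h), v y = m * y + c := by
  have cell := hv.2.1
  rwa [mul_div_cancel_left₀ h (Nat.cast_ne_zero.mpr hN.ne')] at cell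

end Convergence

theorem discrete_to_continuous_H1_convergence_general {L D β : ℝ} (hL : 0 < L) (hD : 0 < D)
    (hβ : 0 ≤ β) :
    ∃ C > 0, ∀ (g : ℝ → ℝ) (u : ℝ → ℝ → ℝ), IsRobinHeatSolution L D β g u →
      ∀ N : ℕ, 0 < N → ∀ (x : ℕ → ℝ → ℝ) (v₀ v : ℝ → ℝ) (t : ℝ),
      IsSpringChain D β (L / N) N g x →
      IsVh L N v₀ → (∀ j : ℕ, 1 ≤ j → j ≤ N + 1 → x j 0 = v₀ (((j : ℝ) - 1) * (L / N))) →
      IsVh L N v → (∀ j : ℕ, 1 ≤ j → j ≤ N + 1 → v (((j : ℝ) - 1) * (L / N)) = x j t) →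
      0 ≤ t →
      √(∫ y in 0..L, deriv (fun x => v x - u x t) y ^ 2)
        ≤ C * (L / N) * √(∫ y in 0..L, deriv (fun x => deriv (fun x' => u x' t) x) y ^ 2)
          + C * √(∫ y in 0..L, deriv (fun x => v₀ x - u x 0) y ^ 2)
          + C * √(L / N)
            * √(∫ s in 0..t, ∫ y in 0..L, deriv (fun x => deriv (fun τ => u x τ) s) y ^ 2) := by
  refine ⟨1 + β * L / D + L / D, by positivity, ?_⟩
  intro g u hu N hN x v₀ v t hx hv₀ hv₀x hv hvx ht
  obtain ⟨h, rfl⟩ : ∃ h, L = N * h :=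
    ⟨L / N, (mul_div_cancel₀ L (Nat.cast_ne_zero.mpr hN.ne')).symm⟩
  have hh : 0 < h := pos_of_mul_pos_right hL N.cast_nonneg
  rw [mul_div_cancel_left₀ h (Nat.cast_ne_zero.mpr hN.ne')] at hx hv₀x hvx ⊢
  have estimate := integral_sq_deriv_sub_le hD hβ hh hu hx ht (hv₀.exists_affine hN)
    (fun j hj => by simpa using (hv₀x (j + 1) (Nat.le_add_left 1 j) (Nat.succ_le_succ hj)).symm)
    (hv.exists_affine hN)
    (fun j hj => by simpa using hvx (j + 1) (Nat.le_add_left 1 j) (Nat.succ_le_succ hj))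
  have nonneg (F : ℝ → ℝ) : 0 ≤ ∫ y in 0..(N * h), F y ^ 2 :=
    intervalIntegral.integral_nonneg hL.le fun y _ => sq_nonneg _
  have nonneg_time : 0 ≤ ∫ s in 0..t, ∫ y in 0..(N * h),
      deriv (fun x => deriv (fun τ => u x τ) s) y ^ 2 :=
    intervalIntegral.integral_nonneg ht fun s _ => nonneg _
  have robin_nonneg : 0 ≤ β * (N * h) / D := by positivity
  have length_nonneg : 0 ≤ N * h / D := by positivity
  refine sqrt_le_mul_sqrt_add_mul_sqrt (by linarith) hh.le (nonneg _) (nonneg _) nonneg_time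
    (estimate.trans (add_le_add (add_le_add_right ?_ _) ?_))
  · exact mul_le_mul_of_nonneg_right (le_add_of_nonneg_right length_nonneg) (nonneg _)
  · exact mul_le_mul_of_nonneg_right (le_add_of_nonneg_left (by positivity))
      (mul_nonneg hh.le nonneg_time)

/-- Theorem 2 (order-1/2 `H¹` convergence of the discrete swimmer to the
continuous one). In the same setting as Theorem 1, there is `C > 0`,
independent of `h = Λ/N`, such that for all `t ≥ 0`:
`‖∂_y(ℓh − ℓ)(·,t)‖ ≤ Ch(‖∂_{yy}ℓ₀‖ + ‖∂_{yy}ℓ(·,t)‖) + C‖∂_y(ℓ_{0,h} − ℓ₀)‖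
  + C√h(∫₀^t ‖∂_{yt}ℓ(·,s)‖² ds)^{1/2}`. -/
theorem discrete_to_continuous_H1_convergence (Λ K a a1 : ℝ)
    (hΛ : 0 < Λ) (hK : 0 < K) (ha : 0 < a) (ha1 : 0 < a1)
    (L0 : ℝ → ℝ) (hL0 : ContDiff ℝ (⊤ : ℕ∞) L0)
    (ℓ : ℝ → ℝ → ℝ)
    (hreg : ContDiff ℝ (⊤ : ℕ∞) (fun p : ℝ × ℝ => ℓ p.1 p.2))
    (hpde : ∀ y ∈ Set.Ioo (0 : ℝ) Λ, ∀ t > (0 : ℝ),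
      deriv (fun s => ℓ y s) t =
        Λ ^ 2 * K * deriv (fun x => deriv (fun x' => ℓ x' t) x) y)
    (hbc0 : ∀ t > (0 : ℝ),
      Λ ^ 2 * K * deriv (fun x => ℓ x t) 0 - Λ * K * (a / (2 * a1)) * ℓ 0 t =
        (Λ / 2) * deriv L0 t)
    (hbcΛ : ∀ t > (0 : ℝ), ℓ Λ t = 0) :
    ∃ C > 0, ∀ N : ℕ, 0 < N →
      ∀ (ℓd : ℕ → ℝ → ℝ) (ℓ0h : ℝ → ℝ) (ℓh : ℝ → ℝ → ℝ),
      (∀ j : ℕ, 1 ≤ j → j ≤ N → Differentiable ℝ (ℓd j)) →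
      (∀ j : ℕ, 2 ≤ j → j ≤ N → ∀ t : ℝ,
        deriv (ℓd j) t =
          Λ ^ 2 * K * (ℓd (j - 1) t - 2 * ℓd j t + ℓd (j + 1) t) / (Λ / N) ^ 2) →
      (∀ t : ℝ, (Λ / N) * deriv (ℓd 1) t =
        Λ ^ 2 * K * (ℓd 2 t - ℓd 1 t) / (Λ / N) - (Λ * K * a / (2 * a1)) * ℓd 1 t -
          (Λ / 2) * deriv L0 t) →
      (∀ t : ℝ, ℓd (N + 1) t = 0) →
      IsVh Λ N ℓ0h →
      (∀ j : ℕ, 1 ≤ j → j ≤ N + 1 → ℓd j 0 = ℓ0h (((j : ℝ) - 1) * (Λ / N))) →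
      (∀ t : ℝ, IsVh Λ N (fun y => ℓh y t)) →
      (∀ j : ℕ, 1 ≤ j → j ≤ N + 1 → ∀ t : ℝ,
        ℓh (((j : ℝ) - 1) * (Λ / N)) t = ℓd j t) →
      ∀ t ≥ (0 : ℝ),
        Real.sqrt (∫ y in (0:ℝ)..Λ, (deriv (fun x => ℓh x t - ℓ x t) y) ^ 2) ≤
          C * (Λ / N) *
            (Real.sqrt (∫ y in (0:ℝ)..Λ,
                (deriv (fun x => deriv (fun x' => ℓ x' 0) x) y) ^ 2) +
              Real.sqrt (∫ y in (0:ℝ)..Λ,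
                (deriv (fun x => deriv (fun x' => ℓ x' t) x) y) ^ 2)) +
          C * Real.sqrt (∫ y in (0:ℝ)..Λ, (deriv (fun x => ℓ0h x - ℓ x 0) y) ^ 2) +
          C * Real.sqrt (Λ / N) *
            Real.sqrt (∫ s in (0:ℝ)..t, ∫ y in (0:ℝ)..Λ,
              (deriv (fun x => deriv (fun τ => ℓ x τ) s) y) ^ 2) := by
  obtain ⟨C, hC, estimate⟩ := discrete_to_continuous_H1_convergence_general hΛ
    (show 0 < Λ ^ 2 * K by positivity) (show 0 ≤ Λ * K * a / (2 * a1) by positivity)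
  refine ⟨C, hC, fun N hN ℓd ℓ0h ℓh hdiff hode hode1 hclamp hV0 hinit hVh hnode t ht => ?_⟩
  have solution : IsRobinHeatSolution Λ (Λ ^ 2 * K) (Λ * K * a / (2 * a1))
      (fun t => Λ / 2 * deriv L0 t) ℓ :=
    { contDiff := contDiff_infty.mp hreg 2
      heat := hpde
      robin := fun t ht => mul_div_assoc (Λ * K) a (2 * a1) ▸ hbc0 t ht
      dirichlet := hbcΛ }
  have chain : IsSpringChain (Λ ^ 2 * K) (Λ * K * a / (2 * a1)) (Λ / N) N
      (fun t => Λ / 2 * deriv L0 t) ℓd :=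
    { continuousOn := fun j hj hjN => (hdiff j hj hjN).continuous.continuousOn
      differentiableAt := fun j hj hjN t _ => hdiff j hj hjN t
      interior := fun j hj hjN t _ => hode j hj hjN t
      left_end := fun t _ => hode1 t
      right_end := fun t _ => hclamp t }
  refine (estimate _ ℓ solution N hN ℓd ℓ0h (fun y => ℓh y t) t chain hV0 hinit (hVh t)
    (fun j hj hjN => hnode j hj hjN t) ht).trans ?_
  gcongr
  exact le_add_of_nonneg_left (Real.sqrt_nonneg _)
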